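/- arXiv:1303.3323 — 2 statements merged into one kernel-verified Lean document; each statement's English description precedes it below -/
import Mathlib

section
/- Let the alphabet Fin k be partitioned by a predicate P : Fin k → Bool into a set of k_v vowels (P true) and k_c consonants (P false), with k_v ≥ 1, k_c ≥ 1 and k = k_v + k_c, and let n ≥ 2. If n is even, or if n is odd and k_v = k_c, then there exists a U-cycle for the set of class-alternating words of length n over Fin k. -/
/-!
A U-cycle for `S` is an Eulerian circuit in the digraph whose arcs are the words in `S`, a word
running from its longest proper prefix to its longest proper suffix. A permutation `σ` of `S` that
sends each word to one that may follow it decomposes `S` into closed trails. If `a` may be followed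
by `σ b` but lies in another cycle than `b`, then `σ * swap a b` is again such a permutation and
joins these two cycles into one; hence when the digraph is connected, a permutation with maximal
cycles has only one cycle.

For class-alternating words, such a permutation rotates a word and applies a permutation `φ` to the
letter that passes from the front to the back. The first and last letters of the word are in the
same class exactly when `n` is odd, so alternation survives if `φ` preserves the classes for even
`n` and exchanges them for odd `n`; the latter is possible when the classes have equal size.
The digraph is connected because the letters of any word may be appended one by one, after at most
one extra letter to correct the class of the last one.
-/

/-- A U-cycle for a finite set `S` of `n`-letter words over the alphabet `Fin k`. -/
def IsUCycle {n k : ℕ} (S : Finset (Fin n → Fin k)) (s : ZMod S.card → Fin k) : Prop :=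
  Set.BijOn (fun i : ZMod S.card => fun j : Fin n => s (i + ((j : ℕ) : ZMod S.card)))
    Set.univ ↑S

/-- A word `w` of length `n` is class-alternating with respect to the vowel/consonant
classification `P` if consecutive letters always lie in different classes. -/
def ClassAlternating {n k : ℕ} (P : Fin k → Bool) (w : Fin n → Fin k) : Prop :=
  ∀ i j : Fin n, (j : ℕ) = (i : ℕ) + 1 → P (w i) ≠ P (w j)


instance {n k : ℕ} (P : Fin k → Bool) :
    DecidablePred (fun w : Fin n → Fin k => ClassAlternating P w) := fun w =>
  inferInstanceAs (Decidable (∀ i j : Fin n, (j : ℕ) = (i : ℕ) + 1 → P (w i) ≠ P (w j)))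

open Equiv Relation

section Permutations

variable {α : Type*}

lemma sameCycle_of_forall_sameCycle_apply {σ τ : Perm α} (h : ∀ x, τ.SameCycle x (σ x)) {x y : α}
    (hxy : σ.SameCycle x y) : τ.SameCycle x y := by
  obtain ⟨i, rfl⟩ := hxy
  induction i with
  | zero => exact .refl τ x
  | succ i ih =>
    rw [add_comm, zpow_one_add, Perm.mul_apply]
    exact ih.trans (h _)
  | pred i ih =>
    refine ih.trans (.symm ?_)
    simpa [← Perm.mul_apply, ← zpow_one_add] using h ((σ ^ (-(i : ℤ) - 1)) x)

section MulSwap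

variable [Finite α] [DecidableEq α] {σ : Perm α} {a b : α}

lemma sameCycle_mul_swap (hab : ¬ σ.SameCycle a b) : (σ * swap a b).SameCycle a b := by
  -- `σ * swap a b` sends `a` to `σ b` and then follows `σ` up to `b`, as this path avoids `a`.
  have reaches_b (i : ℕ) : ∀ z, (σ ^ i) z = b → (σ * swap a b).SameCycle z b := by
    induction i with
    | zero => rintro z rfl; exact .refl _ _
    | succ i ih =>
      intro z hz
      obtain rfl | hzb := eq_or_ne z b
      · exact .refl _ _
      have hza : z ≠ a := by rintro rfl; exact hab ⟨(i + 1 : ℕ), by rwa [zpow_natCast]⟩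
      rw [← Perm.sameCycle_apply_left, Perm.mul_apply, swap_apply_of_ne_of_ne hza hzb]
      exact ih _ (by rwa [pow_succ, Perm.mul_apply] at hz)
  obtain ⟨i, hi⟩ := (Perm.sameCycle_apply_left.2 (.refl σ b)).exists_nat_pow_eq
  simpa [← Perm.sameCycle_apply_left (x := a)] using reaches_b i (σ b) hi

lemma sameCycle_mul_swap_of_sameCycle (hab : ¬ σ.SameCycle a b) {x y : α}
    (hxy : σ.SameCycle x y) : (σ * swap a b).SameCycle x y := by
  refine sameCycle_of_forall_sameCycle_apply (fun z ↦ ?_) hxy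
  have hz : (σ * swap a b).SameCycle z (swap a b z) := by
    rw [swap_apply_def]
    split_ifs with hza hzb
    · rw [hza]; exact sameCycle_mul_swap hab
    · rw [hzb]; exact (sameCycle_mul_swap hab).symm
    · exact .refl _ z
  simpa using hz.trans (Perm.sameCycle_apply_right.2 (.refl _ _))

end MulSwap

/-- A relation is difunctional if any two elements with a common successor have the same
successors. This captures consecutiveness of arcs in a digraph: the arcs leading into a vertex are
all followed by the same arcs, namely those leading out of it. -/
def Difunctional {α β : Type*} (r : α → β → Prop) : Prop :=
  ∀ ⦃a a' b b'⦄, r a b → r a' b → r a' b' → r a b'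

/-- Euler's theorem: for `r` the consecutiveness of arcs in a digraph, `σ₀` covers the arcs by
disjoint closed trails, and a permutation with a single cycle is an Eulerian circuit. -/
theorem exists_perm_forall_sameCycle [Finite α] {r : α → α → Prop} (hr : Difunctional r)
    (hconn : ∀ x y, EqvGen r x y) {σ₀ : Perm α} (hσ₀ : ∀ x, r x (σ₀ x)) :
    ∃ σ : Perm α, (∀ x, r x (σ x)) ∧ ∀ x y, σ.SameCycle x y := by
  classical
  obtain ⟨σ, hσ, hmax⟩ := (Set.toFinite {σ : Perm α | ∀ x, r x (σ x)}).exists_maximalFor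
    Perm.SameCycle.setoid _ ⟨σ₀, hσ₀⟩
  have sameCycle_of_rel {a b : α} (hab : r a (σ b)) : σ.SameCycle a b := by
    by_contra hn
    have hswap (x : α) : r x ((σ * swap a b) x) := by
      rw [Perm.mul_apply, swap_apply_def]
      split_ifs with hxa hxb
      · exact hxa ▸ hab
      · exact hxb ▸ hr (hσ b) hab (hσ a)
      · exact hσ x
    exact hn (hmax hswap (fun _ _ ↦ sameCycle_mul_swap_of_sameCycle hn) (sameCycle_mul_swap hn))
  refine ⟨σ, hσ, fun x y ↦ Setoid.eqvGen_le (s := Perm.SameCycle.setoid σ)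
    (fun a b hab ↦ Perm.sameCycle_symm_apply_right.1 (sameCycle_of_rel ?_)) (hconn x y)⟩
  rwa [apply_symm_apply]

theorem exists_equiv_zmod_card [Fintype α] [Nonempty α] {σ : Perm α}
    (hσ : ∀ x y, σ.SameCycle x y) :
    ∃ c : ZMod (Fintype.card α) ≃ α, ∀ i, c (i + 1) = σ (c i) := by
  obtain ⟨a⟩ := ‹Nonempty α›
  have hcycle : σ.IsCycleOn (Finset.univ : Finset α) := ⟨by simp, fun x _ y _ ↦ hσ x y⟩
  have pow_apply_eq_iff (i j : ℕ) :
      (σ ^ i) a = (σ ^ j) a ↔ (i : ZMod (Fintype.card α)) = j := by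
    rw [ZMod.natCast_eq_natCast_iff, hcycle.pow_apply_eq_pow_apply (Finset.mem_univ a),
      Finset.card_univ]
  have : NeZero (Fintype.card α) := ⟨Fintype.card_ne_zero⟩
  let c (i : ZMod (Fintype.card α)) : α := (σ ^ i.val) a
  have hc : Function.Bijective c :=
    (Fintype.bijective_iff_injective_and_card c).2
      ⟨fun i j hij ↦ by simpa using (pow_apply_eq_iff _ _).1 hij, ZMod.card _⟩
  refine ⟨.ofBijective c hc, fun i ↦ ?_⟩
  rw [ofBijective_apply, ofBijective_apply, ← Perm.mul_apply, ← pow_succ', pow_apply_eq_iff]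
  simp

lemma exists_perm_forall_apply_iff_not [Fintype α] {p : α → Prop} [DecidablePred p]
    (h : Fintype.card {a // p a} = Fintype.card {a // ¬ p a}) :
    ∃ φ : Perm α, ∀ a, p (φ a) ↔ ¬ p a := by
  let e := Fintype.equivOfCardEq h
  exact ⟨e.extendSubtype, fun a ↦ ⟨fun hφa ha ↦ e.extendSubtype_mem a ha hφa,
    fun ha ↦ not_not.1 (e.extendSubtype_not_mem a ha)⟩⟩

end Permutations

section Words

variable {n : ℕ} {α : Type*}

/-- The word `v` may follow `w` in a U-cycle for `S`: this is the relation of consecutive arcs in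
the de Bruijn digraph, whose arcs are words of length `n + 1` and whose vertices are words of
length `n`. -/
def Overlap {S : Finset (Fin (n + 1) → α)} (w v : S) : Prop :=
  Fin.tail w.1 = Fin.init v.1

lemma difunctional_overlap (S : Finset (Fin (n + 1) → α)) : Difunctional (Overlap (S := S)) :=
  fun _ _ _ _ hab ha'b ha'b' ↦ hab.trans (ha'b.symm.trans ha'b')

lemma apply_add_zero_of_overlap {R : Type*} [AddCommMonoidWithOne R]
    {S : Finset (Fin (n + 1) → α)} {c : R → S} (hc : ∀ i, Overlap (c i) (c (i + 1)))
    (i : R) (j : Fin (n + 1)) : (c (i + (j : ℕ))).1 0 = (c i).1 j := by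
  induction j using Fin.induction generalizing i with
  | zero => simp
  | succ j ih =>
    rw [Fin.val_succ, Nat.cast_succ, add_comm (j : R), ← add_assoc, ← Fin.val_castSucc, ih]
    exact (congrFun (hc i) j).symm

theorem exists_isUCycle {k : ℕ} {S : Finset (Fin (n + 1) → Fin k)} (hS : S.Nonempty)
    {σ₀ : Perm S} (hσ₀ : ∀ w, Overlap w (σ₀ w)) (hconn : ∀ w v : S, EqvGen Overlap w v) :
    ∃ s, IsUCycle S s := by
  obtain ⟨σ, hσ, hcycle⟩ := exists_perm_forall_sameCycle (difunctional_overlap S) hconn hσ₀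
  have : Nonempty S := hS.to_subtype
  have hcard := exists_equiv_zmod_card hcycle
  rw [Fintype.card_coe] at hcard
  obtain ⟨c, hc⟩ := hcard
  have hbij : Set.BijOn (fun i ↦ (c i).1) Set.univ S :=
    ⟨fun i _ ↦ (c i).2, fun i _ j _ hij ↦ c.injective (Subtype.ext hij),
      fun w hw ↦ ⟨c.symm ⟨w, hw⟩, trivial, by simp⟩⟩
  have hwindow (i : ZMod S.card) : (c i).1 = fun j : Fin (n + 1) ↦ (c (i + (j : ℕ))).1 0 :=
    funext fun j ↦ (apply_add_zero_of_overlap (fun i ↦ hc i ▸ hσ (c i)) i j).symm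
  exact ⟨fun i ↦ (c i).1 0, hbij.congr fun i _ ↦ hwindow i⟩

/-- Cyclic shift of words by one place to the left in which the letter carried from the front to
the back is changed by `φ`. -/
def twistedRotation (φ : Perm α) : Perm (Fin (n + 1) → α) where
  toFun w := Fin.snoc (Fin.tail w) (φ (w 0))
  invFun v := Fin.cons (φ.symm (v (Fin.last n))) (Fin.init v)
  left_inv w := by simp
  right_inv v := by simp

end Words

section AlternatingWords

variable {n k : ℕ} {P : Fin k → Bool}

namespace ClassAlternating

variable {w : Fin (n + 1) → Fin k}

lemma apply_eq_apply_zero_iff_even (hw : ClassAlternating P w) (i : Fin (n + 1)) :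
    P (w i) = P (w 0) ↔ Even (i : ℕ) := by
  induction i using Fin.induction with
  | zero => simp
  | succ i ih =>
    have hi : P (w i.castSucc) ≠ P (w i.succ) := hw _ _ (by simp)
    rw [Fin.val_succ, Nat.even_add_one, ← Fin.val_castSucc, ← ih, Bool.eq_not.2 hi.symm,
      Bool.not_eq]

lemma snoc_tail (hw : ClassAlternating P w) {a : Fin k} (ha : P (w (Fin.last n)) ≠ P a) :
    ClassAlternating P (Fin.snoc (Fin.tail w) a : Fin (n + 1) → Fin k) := by
  intro i j hij
  obtain ⟨i, rfl⟩ := Fin.exists_castSucc_eq.2 (show i ≠ Fin.last n by grind)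
  rw [Fin.snoc_castSucc]
  cases j using Fin.lastCases with
  | last =>
    have hi : i.succ = Fin.last n := by ext; simpa using hij.symm
    rwa [Fin.snoc_last, Fin.tail, hi]
  | cast j =>
    rw [Fin.snoc_castSucc]
    exact hw _ _ (by simpa using hij)

lemma twistedRotation (hw : ClassAlternating P w) {φ : Perm (Fin k)}
    (hφ : ∀ a, P (φ a) = P a ↔ Even (n + 1)) : ClassAlternating P (twistedRotation φ w) := by
  refine hw.snoc_tail fun h ↦ ?_
  have hlast : P (w (Fin.last n)) = P (w 0) ↔ Even n := hw.apply_eq_apply_zero_iff_even _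
  rw [h, hφ, Nat.even_add_one] at hlast
  exact not_iff_self hlast

end ClassAlternating

/-- The set of class-alternating words for which a U-cycle is sought, as a finset. -/
abbrev alternatingWords (P : Fin k → Bool) (n : ℕ) : Finset (Fin n → Fin k) :=
  Finset.univ.filter fun w ↦ ClassAlternating P w

lemma mem_alternatingWords {w : Fin n → Fin k} :
    w ∈ alternatingWords P n ↔ ClassAlternating P w := by
  simp

lemma alternatingWords_nonempty (hP : P.Surjective) (n : ℕ) : (alternatingWords P n).Nonempty := by
  refine ⟨fun i ↦ Function.surjInv hP (i : ℕ).bodd, mem_alternatingWords.2 fun i j hij ↦ ?_⟩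
  simp [Function.surjInv_eq, hij]

lemma exists_overlap_apply_last_eq (w : alternatingWords P (n + 1)) {a : Fin k}
    (ha : P (w.1 (Fin.last n)) ≠ P a) :
    ∃ u : alternatingWords P (n + 1), Overlap w u ∧ u.1 (Fin.last n) = a :=
  ⟨⟨Fin.snoc (Fin.tail w.1) a,
    mem_alternatingWords.2 ((mem_alternatingWords.1 w.2).snoc_tail ha)⟩,
    (Fin.init_snoc (α := fun _ ↦ Fin k) ..).symm, Fin.snoc_last (α := fun _ ↦ Fin k) ..⟩

lemma exists_reflTransGen_overlap_apply_last_eq (hP : P.Surjective)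
    (w : alternatingWords P (n + 1)) (a : Fin k) :
    ∃ u, ReflTransGen Overlap w u ∧ u.1 (Fin.last n) = a := by
  by_cases ha : P (w.1 (Fin.last n)) = P a
  · obtain ⟨b, hb⟩ := hP (!P a)
    obtain ⟨u, hwu, hu⟩ := exists_overlap_apply_last_eq w (a := b) (by simp [ha, hb])
    obtain ⟨v, huv, hv⟩ := exists_overlap_apply_last_eq u (a := a) (by simp [hu, hb])
    exact ⟨v, .tail (.single hwu) huv, hv⟩
  · obtain ⟨u, hwu, hu⟩ := exists_overlap_apply_last_eq w ha
    exact ⟨u, .single hwu, hu⟩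

/-- The index condition matches the last `j + 1` letters of `u` with the first `j + 1` of `v`. -/
lemma exists_reflTransGen_overlap_last_letters_eq_first_letters (hP : P.Surjective)
    (w v : alternatingWords P (n + 1)) (j : Fin (n + 1)) :
    ∃ u, ReflTransGen Overlap w u ∧
      ∀ i i' : Fin (n + 1), (i + j : ℕ) = i' + n → u.1 i = v.1 i' := by
  induction j using Fin.induction with
  | zero =>
    obtain ⟨u, hwu, hu⟩ := exists_reflTransGen_overlap_apply_last_eq hP w (v.1 0)
    refine ⟨u, hwu, fun i i' hii' ↦ ?_⟩
    obtain ⟨rfl, rfl⟩ : i = Fin.last n ∧ i' = 0 := by grind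
    exact hu
  | succ j ih =>
    obtain ⟨u, hwu, hu⟩ := ih
    have hlast : P (u.1 (Fin.last n)) ≠ P (v.1 j.succ) := by
      rw [hu (Fin.last n) j.castSucc (by simp [add_comm])]
      exact mem_alternatingWords.1 v.2 _ _ (by simp)
    obtain ⟨u', huu', hu'⟩ := exists_overlap_apply_last_eq u hlast
    refine ⟨u', hwu.tail huu', fun i i' hii' ↦ ?_⟩
    cases i using Fin.lastCases with
    | last =>
      obtain rfl : i' = j.succ := by grind
      exact hu'
    | cast i => exact (congrFun huu' i).symm.trans (hu i.succ i' (by grind))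

lemma reflTransGen_overlap (hP : P.Surjective) (w v : alternatingWords P (n + 1)) :
    ReflTransGen Overlap w v := by
  obtain ⟨u, hwu, hu⟩ :=
    exists_reflTransGen_overlap_last_letters_eq_first_letters hP w v (Fin.last n)
  obtain rfl : u = v := Subtype.ext (funext fun i ↦ hu i i rfl)
  exact hwu

lemma exists_perm_overlap {φ : Perm (Fin k)} (hφ : ∀ a, P (φ a) = P a ↔ Even (n + 1)) :
    ∃ σ : Perm (alternatingWords P (n + 1)), ∀ w, Overlap w (σ w) :=
  ⟨(twistedRotation φ).subtypePermOfFintype fun _ hw ↦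
      mem_alternatingWords.2 ((mem_alternatingWords.1 hw).twistedRotation hφ),
    fun _ ↦ (Fin.init_snoc (α := fun _ ↦ Fin k) ..).symm⟩

lemma exists_perm_forall_apply_eq_iff_even
    (h : Even n ∨ (Finset.univ.filter fun a ↦ P a = true).card =
      (Finset.univ.filter fun a ↦ P a = false).card) :
    ∃ φ : Perm (Fin k), ∀ a, P (φ a) = P a ↔ Even n := by
  by_cases hn : Even n
  · exact ⟨1, by simp [hn]⟩
  · obtain ⟨φ, hφ⟩ := exists_perm_forall_apply_iff_not (p := fun a ↦ P a = true)
      (by simpa [Fintype.card_subtype] using h.resolve_left hn)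
    exact ⟨φ, fun a ↦ by rw [Bool.eq_iff_iff, hφ]; simp [hn]⟩

end AlternatingWords

/-- If the alphabet `Fin k` is split by `P` into `k_v ≥ 1` vowels and `k_c ≥ 1`
consonants (so `k = k_v + k_c`), and `n ≥ 2`, then a U-cycle of class-alternating
`n`-letter words exists provided `n` is even, or `n` is odd and `k_v = k_c`. -/
theorem exists_ucycle_class_alternating (n k kv kc : ℕ) (P : Fin k → Bool)
    (hkv : (Finset.univ.filter (fun x : Fin k => P x = true)).card = kv)
    (hkc : (Finset.univ.filter (fun x : Fin k => P x = false)).card = kc)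
    (hkv1 : 1 ≤ kv) (hkc1 : 1 ≤ kc) (hk : k = kv + kc) (hn : 2 ≤ n)
    (hpar : Even n ∨ (Odd n ∧ kv = kc)) :
    ∃ s : ZMod (Finset.univ.filter
        (fun w : Fin n → Fin k => ClassAlternating P w)).card → Fin k,
      IsUCycle (Finset.univ.filter (fun w : Fin n → Fin k => ClassAlternating P w)) s := by
  subst hkv hkc
  obtain ⟨n, rfl⟩ := Nat.exists_eq_add_one.2 (show 0 < n by lia)
  have hP : P.Surjective := by
    obtain ⟨v, hv⟩ := Finset.card_pos.1 hkv1
    obtain ⟨c, hc⟩ := Finset.card_pos.1 hkc1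
    exact Bool.forall_bool.2 ⟨⟨c, (Finset.mem_filter.1 hc).2⟩, ⟨v, (Finset.mem_filter.1 hv).2⟩⟩
  obtain ⟨φ, hφ⟩ := exists_perm_forall_apply_eq_iff_even (hpar.imp_right And.right)
  obtain ⟨σ₀, hσ₀⟩ := exists_perm_overlap hφ
  exact exists_isUCycle (alternatingWords_nonempty hP _) hσ₀
    fun w v ↦ EqvGen.reflTransGen_le_eqvGen _ _ _ (reflTransGen_overlap hP w v)
end

section
/- For every n ≥ 2 with n ≠ 3 there exists a U-cycle for the set of illegal rankings of n contestants, i.e., the set of words of length n over the alphabet {1,…,n} that are not legal rankings. -/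
/-- A ranking `r : Fin n → Fin n` (value `i` represents rank `i+1`) is legal if the rank
of each contestant equals 1 plus the number of contestants with strictly smaller rank
(0-indexed: `r i = #{j | r j < r i}`). -/
def LegalRanking {n : ℕ} (r : Fin n → Fin n) : Prop :=
  ∀ i : Fin n, (r i : ℕ) = (Finset.univ.filter (fun j : Fin n => r j < r i)).card


instance {n : ℕ} : DecidablePred (fun r : Fin n → Fin n => LegalRanking r) := fun r =>
  inferInstanceAs (Decidable (∀ i : Fin n,
    (r i : ℕ) = (Finset.univ.filter (fun j : Fin n => r j < r i)).card))

/-!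
A permutation of a finite set `S` of words which moves every word `w` to some word whose first
letters are the last letters of `w` reads off a U-cycle as soon as it is a single cycle. If `S` is
closed under rotation, then the rotation is such a permutation, and two of its cycles can be spliced
at words that agree in all letters but the last. Splicing as long as possible yields a single cycle
whenever `S` is connected under changes of one letter.

Illegal rankings are connected in this sense. A ranking without a first place is illegal, so all of
these are joined letter by letter. An illegal ranking with at least two first places has some other
contestant; moving that one to second place, a fourth contestant to third place and then one of the
two winners to second place removes a winner, and at every stage some contestant has more better
placed opponents than the rank allows. A single remaining winner can be moved to second place
directly.
-/

open Equiv Equiv.Perm Function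

open scoped Finset

section CycleJoining

variable {α β : Type*} {g h : Perm α} {x y : α}

theorem sameCycle_setoid_le_of_sameCycle_apply (hgh : ∀ a, h.SameCycle a (g a)) :
    SameCycle.setoid g ≤ SameCycle.setoid h := by
  intro a b hab
  obtain ⟨k, rfl⟩ := hab
  change h.SameCycle a ((g ^ k) a)
  induction k using Int.induction_on with
  | zero => exact SameCycle.rfl
  | succ k ih =>
    rw [add_comm, zpow_one_add, Perm.mul_apply]
    exact ih.trans (hgh _)
  | pred k ih =>
    refine ih.trans (SameCycle.symm ?_)
    simpa [← Perm.mul_apply, ← zpow_one_add] using hgh ((g ^ (-(k : ℤ) - 1)) a)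

variable [Finite α]

/- If `y` did not reach `x` under `swap x y * g`, its orbit would never meet the swapped points and
would thus contain the whole `g`-cycle of `y`; but the `g`-preimage of `y` is now sent to `x`. -/
theorem sameCycle_swap_mul_of_not_sameCycle [DecidableEq α] (hxy : ¬ g.SameCycle x y) :
    (swap x y * g).SameCycle x y := by
  rw [sameCycle_comm]
  by_contra hyx
  have pow_reached (k : ℕ) : (swap x y * g).SameCycle y ((g ^ k) y) := by
    induction k with
    | zero => exact SameCycle.rfl
    | succ k ih =>
      have hx : g ((g ^ k) y) ≠ x := fun h =>
        hxy (SameCycle.symm ⟨(k + 1 : ℕ), by rw [zpow_natCast, pow_succ', Perm.mul_apply, h]⟩)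
      rw [pow_succ', Perm.mul_apply]
      by_cases hy : g ((g ^ k) y) = y
      · rw [hy]
      · rw [← swap_apply_of_ne_of_ne hx hy, ← Perm.mul_apply]
        exact sameCycle_apply_right.2 ih
  obtain ⟨k, hk⟩ : ∃ k : ℕ, (g ^ k) y = g⁻¹ y := SameCycle.exists_nat_pow_eq ⟨-1, by simp⟩
  have hpre : (swap x y * g).SameCycle y (g⁻¹ y) := hk ▸ pow_reached k
  exact hyx (by simpa using sameCycle_apply_right.2 hpre)

theorem sameCycle_setoid_le_swap_mul [DecidableEq α] (hxy : ¬ g.SameCycle x y) :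
    SameCycle.setoid g ≤ SameCycle.setoid (swap x y * g) := by
  have hjoin := sameCycle_swap_mul_of_not_sameCycle hxy
  refine sameCycle_setoid_le_of_sameCycle_apply fun a => ?_
  have hswap : (swap x y * g).SameCycle (g a) (swap x y (g a)) := by
    rw [swap_apply_def]
    split_ifs with hx hy
    · rwa [hx]
    · rw [hy]
      exact hjoin.symm
    · exact SameCycle.rfl
  exact (sameCycle_apply_right.2 SameCycle.rfl).trans hswap.symm

theorem exists_perm_sameCycle_of_apply_eq (f : Perm α) (p : α → β) :
    ∃ g : Perm α, (∀ a, p (g a) = p (f a)) ∧ ∀ a b, p a = p b → g.SameCycle a b := by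
  classical
  obtain ⟨g, hg, hmax⟩ := (Set.toFinite {g : Perm α | ∀ a, p (g a) = p (f a)}).exists_maximalFor
    SameCycle.setoid _ ⟨f, fun _ => rfl⟩
  refine ⟨g, hg, fun a b hab => ?_⟩
  by_contra hne
  have hswap : ∀ c, p (swap a b (g c)) = p (f c) := fun c => by
    rw [← hg c, swap_apply_def]
    split_ifs with ha hb <;> simp [*]
  exact hne (hmax (j := swap a b * g) hswap (sameCycle_setoid_le_swap_mul hne)
    (sameCycle_swap_mul_of_not_sameCycle hne))

end CycleJoining

section UCycle

variable {α : Type*} {n k : ℕ}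

theorem exists_bijective_zmod_apply_add_one [Fintype α] [Nonempty α] {g : Perm α}
    (hg : ∀ a b, g.SameCycle a b) {N : ℕ} (hN : Fintype.card α = N) :
    ∃ w : ZMod N → α, Bijective w ∧ ∀ i, w (i + 1) = g (w i) := by
  obtain ⟨a⟩ := ‹Nonempty α›
  have : NeZero N := ⟨hN ▸ Fintype.card_ne_zero⟩
  have hcycle : g.IsCycleOn (Finset.univ : Finset α) :=
    ⟨by simp, fun b _ c _ => hg b c⟩
  have hpow : g ^ N = 1 := Perm.ext fun b => hN ▸ hcycle.pow_card_apply (Finset.mem_univ b)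
  have hw (m : ℕ) : (g ^ (m : ZMod N).val) a = (g ^ m) a := by
    rw [ZMod.val_natCast, ← pow_eq_pow_mod m hpow]
  refine ⟨fun i => (g ^ i.val) a, ?_, fun i => ?_⟩
  · refine (Fintype.bijective_iff_surjective_and_card _).2 ⟨fun b => ?_, by rw [ZMod.card, hN]⟩
    obtain ⟨m, -, hm⟩ := hcycle.exists_pow_eq (Finset.mem_univ a) (Finset.mem_univ b)
    exact ⟨m, (hw m).trans hm⟩
  · obtain ⟨m, rfl⟩ := ZMod.natCast_zmod_surjective i
    dsimp only
    rw [← Nat.cast_succ, hw, hw, pow_succ', Perm.mul_apply]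

theorem exists_isUCycle_of_init_apply_eq_tail {S : Finset (Fin (n + 1) → Fin k)}
    (hS : S.Nonempty) {g : Perm S} (hshift : ∀ w, Fin.init (g w).1 = Fin.tail w.1)
    (hg : ∀ u v, g.SameCycle u v) : ∃ s, IsUCycle S s := by
  have := hS.to_subtype
  obtain ⟨w, hw, hnext⟩ := exists_bijective_zmod_apply_add_one hg (Fintype.card_coe S)
  have hread (j : Fin (n + 1)) (i : ZMod #S) : (w (i + ((j : ℕ) : ZMod #S))).1 0 = (w i).1 j := by
    induction j using Fin.induction generalizing i with
    | zero => simp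
    | succ j ih =>
      have hletter : (w (i + 1)).1 j.castSucc = (w i).1 j.succ :=
        hnext i ▸ congrFun (hshift (w i)) j
      rw [← hletter, ← ih, Fin.val_succ, Fin.val_castSucc, Nat.cast_succ, add_right_comm, add_assoc]
  refine ⟨fun i => (w i).1 0, ?_⟩
  simp only [IsUCycle, hread]
  exact ⟨fun i _ => (w i).2, fun i _ j _ hij => hw.1 (Subtype.ext hij),
    fun r hr => (hw.2 ⟨r, hr⟩).imp fun i hi => ⟨trivial, congrArg Subtype.val hi⟩⟩

/-- Words of `S` are equivalent if one can be reached from the other inside `S` by changing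
one letter at a time; `S` is connected when all its words are equivalent. -/
def letterChangeSetoid {ι α : Type*} [DecidableEq ι] (S : Finset (ι → α)) : Setoid S :=
  Relation.EqvGen.setoid fun u v => ∃ i a, v.1 = update u.1 i a

theorem letterChangeSetoid_update {ι : Type*} [DecidableEq ι] {S : Finset (ι → α)} {u : S} {i : ι}
    {a : α} (h : update u.1 i a ∈ S) : letterChangeSetoid S u ⟨update u.1 i a, h⟩ :=
  .rel _ _ ⟨i, a, rfl⟩

theorem letterChangeSetoid_of_piecewise_mem {ι : Type*} [Finite ι] [DecidableEq ι]
    {S : Finset (ι → α)} {u v : S} (h : ∀ t : Finset ι, t.piecewise v.1 u.1 ∈ S) :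
    letterChangeSetoid S u v := by
  have := Fintype.ofFinite ι
  have hchange (t : Finset ι) : letterChangeSetoid S u ⟨t.piecewise v.1 u.1, h t⟩ := by
    induction t using Finset.induction with
    | empty => simp
    | insert i t _ ih => exact Setoid.trans' _ ih (.rel _ _ ⟨i, v.1 i, Finset.piecewise_insert ..⟩)
  simpa using hchange Finset.univ

theorem init_comp_finRotate (w : Fin (n + 1) → α) :
    Fin.init (w ∘ finRotate (n + 1)) = Fin.tail w := by
  ext j
  simp [Fin.init, Fin.tail]

theorem sameCycle_of_eq_update {S : Finset (Fin (n + 1) → α)}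
    (hrot : ∀ w ∈ S, w ∘ finRotate (n + 1) ∈ S) {g : Perm S}
    (hshift : ∀ w, Fin.init (g w).1 = Fin.tail w.1)
    (hinit : ∀ u v : S, Fin.init u.1 = Fin.init v.1 → g.SameCycle u v)
    {i : Fin (n + 1)} {a : α} {u v : S} (huv : v.1 = update u.1 i a) : g.SameCycle u v := by
  have same_of_tail {u v : S} (h : Fin.tail u.1 = Fin.tail v.1) : g.SameCycle u v := by
    rw [← sameCycle_apply_left, ← sameCycle_apply_right]
    exact hinit _ _ (by rw [hshift, hshift, h])
  induction i using Fin.induction generalizing u v with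
  | zero => exact same_of_tail (by rw [huv, Fin.tail_update_zero])
  | succ i ih =>
    have same_rotate (w : S) : g.SameCycle w ⟨w.1 ∘ finRotate (n + 1), hrot w.1 w.2⟩ := by
      rw [← sameCycle_apply_left]
      exact hinit _ _ (by rw [hshift, init_comp_finRotate])
    refine (same_rotate u).trans (.trans (ih ?_) (same_rotate v).symm)
    have hpos : (finRotate (n + 1)).symm i.succ = i.castSucc := (symm_apply_eq _).2 (by simp)
    simp only [huv, update_comp_equiv, hpos]

theorem exists_isUCycle_of_letterChange {S : Finset (Fin (n + 1) → Fin k)} (hS : S.Nonempty)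
    (hrot : ∀ w ∈ S, w ∘ finRotate (n + 1) ∈ S) (hconn : ∀ u v, letterChangeSetoid S u v) :
    ∃ s, IsUCycle S s := by
  let rotate : Perm (Fin (n + 1) → Fin k) := (finRotate (n + 1)).symm.arrowCongr (Equiv.refl _)
  let f : Perm S := rotate.subtypePermOfFintype hrot
  obtain ⟨g, hg, hinit⟩ := exists_perm_sameCycle_of_apply_eq f fun w => Fin.init w.1
  have hshift (w : S) : Fin.init (g w).1 = Fin.tail w.1 := (hg w).trans (init_comp_finRotate w.1)
  have hle : letterChangeSetoid S ≤ SameCycle.setoid g :=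
    Setoid.eqvGen_le fun u v ⟨i, a, huv⟩ => sameCycle_of_eq_update hrot hshift hinit huv
  exact exists_isUCycle_of_init_apply_eq_tail hS hshift fun u v => hle (hconn u v)

end UCycle

section LegalRanking

variable {n : ℕ}

theorem not_legalRanking_of_lt_card {r : Fin n → Fin n} {i : Fin n} {t : Finset (Fin n)}
    (ht : ∀ j ∈ t, r j < r i) (hcard : (r i : ℕ) < #t) : ¬ LegalRanking r := fun h =>
  hcard.not_ge (h i ▸ Finset.card_le_card fun j hj => by simpa using ht j hj)

theorem not_legalRanking_of_forall_ne_zero [NeZero n] {r : Fin n → Fin n} (hr : ∀ i, r i ≠ 0) :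
    ¬ LegalRanking r := by
  obtain ⟨i, hi⟩ := Finite.exists_min r
  exact fun h => hr i (Fin.ext (by simp [h i, hi]))

theorem legalRanking_zero [NeZero n] : LegalRanking (0 : Fin n → Fin n) := fun i => by simp

theorem legalRanking_comp_perm {r : Fin n → Fin n} (σ : Perm (Fin n)) :
    LegalRanking (r ∘ σ) ↔ LegalRanking r := by
  refine Equiv.forall_congr σ fun i => ?_
  rw [comp_apply, Finset.card_equiv σ]
  simp

/-- The words that are not legal rankings of `n` contestants. -/
abbrev illegalRankings (n : ℕ) : Finset (Fin n → Fin n) :=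
  Finset.univ.filter fun r => ¬ LegalRanking r

theorem mem_illegalRankings {r : Fin n → Fin n} : r ∈ illegalRankings n ↔ ¬ LegalRanking r := by
  simp

theorem letterChangeSetoid_of_forall_ne_zero [NeZero n] {u v : illegalRankings n}
    (hu : ∀ i, u.1 i ≠ 0) (hv : ∀ i, v.1 i ≠ 0) : letterChangeSetoid _ u v :=
  letterChangeSetoid_of_piecewise_mem fun t => mem_illegalRankings.2 <|
    not_legalRanking_of_forall_ne_zero fun i => t.piecewise_cases v.1 u.1 (· ≠ 0) (hv i) (hu i)

theorem exists_letterChangeSetoid_of_two_zeros (hn : n + 2 ≠ 3) {u : illegalRankings (n + 2)}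
    {a b : Fin (n + 2)} (hab : a ≠ b) (ha : u.1 a = 0) (hb : u.1 b = 0) :
    ∃ v, letterChangeSetoid _ u v ∧ v.1 a ≠ 0 ∧ ∀ i, u.1 i ≠ 0 → v.1 i ≠ 0 := by
  obtain ⟨c, hc⟩ : ∃ c, u.1 c ≠ 0 :=
    Function.ne_iff.1 fun h => mem_illegalRankings.1 u.2 (h ▸ legalRanking_zero)
  have hac : a ≠ c := fun h => hc (h ▸ ha)
  have hbc : b ≠ c := fun h => hc (h ▸ hb)
  have habc : #{a, b, c} = 3 := Finset.card_eq_three.2 ⟨a, b, c, hab, hac, hbc, rfl⟩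
  have hcard : 3 < n + 2 := by
    have : #{a, b, c} ≤ n + 2 := by simpa using Finset.card_le_univ {a, b, c}
    omega
  obtain ⟨d, -, hd⟩ : ∃ d ∈ Finset.univ, d ∉ ({a, b, c} : Finset _) :=
    Finset.exists_mem_notMem_of_card_lt_card (by simpa [habc] using hcard)
  obtain ⟨hda, hdb, hdc⟩ : d ≠ a ∧ d ≠ b ∧ d ≠ c := by simpa using hd
  let third : Fin (n + 2) := ⟨2, by omega⟩
  have hmem_c : update u.1 c 1 ∈ illegalRankings (n + 2) := mem_illegalRankings.2 <|
    not_legalRanking_of_lt_card (i := c) (t := {a, b}) (by simp [*]) (by simp [*])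
  have hmem_d : update (update u.1 c 1) d third ∈ illegalRankings (n + 2) :=
    mem_illegalRankings.2 <| not_legalRanking_of_lt_card (i := c) (t := {a, b})
      (by simp [*, hda.symm, hdb.symm, hdc.symm]) (by simp [*, hdc.symm])
  have hmem_a : update (update (update u.1 c 1) d third) a 1 ∈ illegalRankings (n + 2) :=
    mem_illegalRankings.2 <| not_legalRanking_of_lt_card (i := d) (t := {a, b, c})
      (by simp [*, third, Fin.lt_def, hdc.symm, hdb.symm, hab.symm, hac.symm]) (by simp [*, third])
  have hpath : letterChangeSetoid _ u ⟨_, hmem_a⟩ :=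
    Setoid.trans' _ (letterChangeSetoid_update hmem_c) <|
      Setoid.trans' _ (letterChangeSetoid_update (u := ⟨_, hmem_c⟩) hmem_d)
        (letterChangeSetoid_update (u := ⟨_, hmem_d⟩) hmem_a)
  refine ⟨⟨_, hmem_a⟩, hpath, by simp, fun i hi => ?_⟩
  simp only [update_apply]
  split_ifs <;> simp [third, Fin.ext_iff, *]

theorem exists_letterChangeSetoid_ne_zero (hn : n + 2 ≠ 3) {u : illegalRankings (n + 2)}
    {a : Fin (n + 2)} (ha : u.1 a = 0) :
    ∃ v, letterChangeSetoid _ u v ∧ v.1 a ≠ 0 ∧ ∀ i, u.1 i ≠ 0 → v.1 i ≠ 0 := by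
  by_cases! hzero : ∃ b, a ≠ b ∧ u.1 b = 0
  · obtain ⟨b, hab, hb⟩ := hzero
    exact exists_letterChangeSetoid_of_two_zeros hn hab ha hb
  · have hne (i : Fin (n + 2)) : update u.1 a 1 i ≠ 0 := by
      rcases eq_or_ne a i with rfl | hai
      · simp
      · simpa [hai.symm] using hzero i hai
    exact ⟨⟨_, mem_illegalRankings.2 (not_legalRanking_of_forall_ne_zero hne)⟩,
      letterChangeSetoid_update _, hne a, fun i _ => hne i⟩

theorem exists_letterChangeSetoid_forall_ne_zero (hn : n + 2 ≠ 3) (u : illegalRankings (n + 2)) :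
    ∃ v, letterChangeSetoid _ u v ∧ ∀ i, v.1 i ≠ 0 := by
  induction hZ : ({i | u.1 i = 0} : Finset (Fin (n + 2))) using Finset.strongInduction
    generalizing u with
  | H Z ih =>
    subst hZ
    by_cases! hzero : ∃ a, u.1 a = 0
    · obtain ⟨a, ha⟩ := hzero
      obtain ⟨v, huv, hva, hmono⟩ := exists_letterChangeSetoid_ne_zero hn ha
      have hfewer : ({i | v.1 i = 0} : Finset (Fin (n + 2))) ⊂
          ({i | u.1 i = 0} : Finset (Fin (n + 2))) :=
        Finset.ssubset_iff_of_subset (fun i => by simpa using not_imp_not.1 (hmono i)) |>.2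
          ⟨a, by simpa using ha, by simpa using hva⟩
      obtain ⟨w, hvw, hw⟩ := ih _ hfewer v rfl
      exact ⟨w, Setoid.trans' _ huv hvw, hw⟩
    · exact ⟨u, Setoid.refl' _ u, hzero⟩

theorem letterChangeSetoid_illegalRankings (hn : n + 2 ≠ 3) (u v : illegalRankings (n + 2)) :
    letterChangeSetoid _ u v := by
  obtain ⟨u', huu', hu'⟩ := exists_letterChangeSetoid_forall_ne_zero hn u
  obtain ⟨v', hvv', hv'⟩ := exists_letterChangeSetoid_forall_ne_zero hn v
  exact Setoid.trans' _ huu' <|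
    Setoid.trans' _ (letterChangeSetoid_of_forall_ne_zero hu' hv') (Setoid.symm' _ hvv')

end LegalRanking

/-- For every `n ≥ 2` with `n ≠ 3` there exists a U-cycle for the set of illegal rankings
of `n` contestants. -/
theorem exists_ucycle_illegal_rankings (n : ℕ) (hn : 2 ≤ n) (hn3 : n ≠ 3) :
    ∃ s : ZMod (Finset.univ.filter
        (fun r : Fin n → Fin n => ¬ LegalRanking r)).card → Fin n,
      IsUCycle (Finset.univ.filter (fun r : Fin n → Fin n => ¬ LegalRanking r)) s := by
  obtain ⟨m, rfl⟩ := Nat.exists_eq_add_of_le' hn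
  have hne : (illegalRankings (m + 2)).Nonempty :=
    ⟨1, mem_illegalRankings.2 (not_legalRanking_of_forall_ne_zero (by simp))⟩
  have hrot : ∀ r ∈ illegalRankings (m + 2), r ∘ finRotate (m + 2) ∈ illegalRankings (m + 2) :=
    fun r hr => mem_illegalRankings.2 <|
      (legalRanking_comp_perm (finRotate (m + 2))).not.2 (mem_illegalRankings.1 hr)
  exact exists_isUCycle_of_letterChange hne hrot (letterChangeSetoid_illegalRankings hn3)
end
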